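/- arXiv:2410.02460 — 2 statements merged into one kernel-verified Lean document; each statement's English description precedes it below -/
import Mathlib

section
/- For every integer k ≥ 1 and every integer m ≥ 2^k, μ(2^{k+1} − 1, m) = 2^k, and moreover μ*(2^{k+1} − 1, 2^k) = 2^k. -/
/-!
Write `n = 2 ^ (k + 1) - 1`. Both bounds rest on one count, `two_mul_card_dotProduct_ne_zero`:
a nonzero linear form over `𝔽₂` takes the value `1` on exactly half of the vectors.

Lower bound (`le_Mfun`): every row of a matrix with unit diagonal is nonzero, so each coordinate of
`W x` equals `1` for half of the `x`, and the average of `|W x|` is `n / 2 = 2 ^ k - 1 / 2`. Hence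
some `x` has `|W x| ≥ 2 ^ k`.

Upper bound (`exists_matrix`): index the coordinates by the nonzero vectors `v` of `𝔽₂ ^ (k + 1)`.
The words `(⟨v, u⟩)_v` form the simplex code, in which every nonzero word has weight `2 ^ k`.
Take as column `w` the word of some `u` with `⟨w, u⟩ = 1`: the diagonal is then `1`,
every column has weight `2 ^ k`, and every `W x`, being a codeword, has weight `0` or `2 ^ k`.
Columns may repeat, so no system of distinct representatives is needed.
-/

open Matrix

/-- `Mfun W c` is `M(W,c)`: the maximum of `|W·x + c|` over all `x ∈ 𝔽₂ⁿ`. -/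
def Mfun {n : ℕ} (W : Matrix (Fin n) (Fin n) (ZMod 2)) (c : Fin n → ZMod 2) : ℕ :=
  Finset.univ.sup fun x : Fin n → ZMod 2 => hammingNorm (W.mulVec x + c)

/-- `Aset n m`: matrices with all diagonal entries 1 and every column of Hamming weight ≤ m. -/
def Aset (n m : ℕ) : Set (Matrix (Fin n) (Fin n) (ZMod 2)) :=
  {W | (∀ i, W i i = 1) ∧ ∀ j, hammingNorm (fun i => W i j) ≤ m}

/-- `AstarSet n m`: matrices with all diagonal entries 1 and every column of Hamming weight
exactly m. -/
def AstarSet (n m : ℕ) : Set (Matrix (Fin n) (Fin n) (ZMod 2)) :=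
  {W | (∀ i, W i i = 1) ∧ ∀ j, hammingNorm (fun i => W i j) = m}

/-- `μ(n,m) = min { M(W,0) : W ∈ A(n,m) }`. -/
noncomputable def mu (n m : ℕ) : ℕ := sInf ((fun W => Mfun W 0) '' Aset n m)

/-- `μ*(n,m) = min { M(W,0) : W ∈ A*(n,m) }`. -/
noncomputable def muStar (n m : ℕ) : ℕ := sInf ((fun W => Mfun W 0) '' AstarSet n m)

/-- `ν(n,m) = min { M(W,c) : W ∈ A(n,m), c ∈ 𝔽₂ⁿ }`. -/
noncomputable def nu (n m : ℕ) : ℕ := sInf {t | ∃ W ∈ Aset n m, ∃ c, Mfun W c = t}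

/-- `ν*(n,m) = min { M(W,c) : W ∈ A*(n,m), c ∈ 𝔽₂ⁿ }`. -/
noncomputable def nuStar (n m : ℕ) : ℕ := sInf {t | ∃ W ∈ AstarSet n m, ∃ c, Mfun W c = t}

/-- The sequence `a` from the paper: `a(1)=1`, `a(2^k−1+i)=2^{k−1}+a(i)` for `1 ≤ i ≤ 2^k−1`,
and `a(2^{k+1}−1)=2^k`.  (For `2^k ≤ n ≤ 2^{k+1}-1` we have `Nat.log2 n = k`.) -/
def aseq : ℕ → ℕ
  | 0 => 0
  | 1 => 1
  | (n+2) =>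
    let k := Nat.log2 (n+2)
    if n + 2 = 2^(k+1) - 1 then 2^k
    else 2^(k-1) + aseq ((n+2) - (2^k - 1))
decreasing_by
  have hk : 1 ≤ Nat.log2 (n+2) := by
    rw [Nat.le_log2 (by omega)]
    omega
  have h2 : 2 ≤ 2 ^ Nat.log2 (n+2) := by
    calc (2:ℕ) = 2^1 := rfl
    _ ≤ _ := Nat.pow_le_pow_right (by norm_num) hk
  omega

/-- The upper bound `U(n,m)`: with `k` such that `2^k ≤ m < 2^{k+1}` and
`n = (2^{k+1}−1)q + r`, `q ≥ 0`, `1 ≤ r ≤ 2^{k+1}−1`, set `U(n,m) = q·2^k + a(r)`. -/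
def Ufun (n m : ℕ) : ℕ :=
  let k := Nat.log2 m
  let p := 2^(k+1) - 1
  ((n-1)/p) * 2^k + aseq ((n-1) % p + 1)

theorem exists_dotProduct_eq_one {ι : Type*} [Fintype ι] [DecidableEq ι] {u : ι → ZMod 2}
    (hu : u ≠ 0) : ∃ e : ι → ZMod 2, u ⬝ᵥ e = 1 := by
  obtain ⟨i, hi⟩ := Function.ne_iff.mp hu
  refine ⟨Pi.single i 1, ?_⟩
  rw [dotProduct_single_one]
  exact Fin.eq_one_of_ne_zero _ hi

/-- A nonzero linear form over `𝔽₂` is nonzero on half of the vectors: translation by a vector on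
which it takes the value `1` exchanges its support with its kernel. -/
theorem two_mul_card_dotProduct_ne_zero {ι : Type*} [Fintype ι] [DecidableEq ι] {u : ι → ZMod 2}
    (hu : u ≠ 0) :
    2 * (Finset.univ.filter fun v : ι → ZMod 2 => u ⬝ᵥ v ≠ 0).card = 2 ^ Fintype.card ι := by
  obtain ⟨e, he⟩ := exists_dotProduct_eq_one hu
  have hflip : ∀ a : ZMod 2, a + 1 = 0 ↔ a ≠ 0 := by decide
  have hswap : (Finset.univ.filter fun v : ι → ZMod 2 => u ⬝ᵥ v ≠ 0).card =
      (Finset.univ.filter fun v : ι → ZMod 2 => ¬ u ⬝ᵥ v ≠ 0).card := by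
    refine Finset.card_equiv (Equiv.addRight e) fun v => ?_
    simp [dotProduct_add, he, hflip]
  have htotal := Finset.card_filter_add_card_filter_not (s := Finset.univ)
    (fun v : ι → ZMod 2 => u ⬝ᵥ v ≠ 0)
  rw [← hswap, Finset.card_univ, Fintype.card_fun, ZMod.card] at htotal
  omega

theorem le_Mfun (k : ℕ) (W : Matrix (Fin (2 ^ (k + 1) - 1)) (Fin (2 ^ (k + 1) - 1)) (ZMod 2))
    (hW : ∀ i, W i i = 1) : 2 ^ k ≤ Mfun W 0 := by
  by_contra! hlt
  -- The sum over `x` of the weights, counted coordinate by coordinate.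
  have hsum : 2 * ∑ x : Fin (2 ^ (k + 1) - 1) → ZMod 2, hammingNorm (W.mulVec x) =
      (2 ^ (k + 1) - 1) * 2 ^ (2 ^ (k + 1) - 1) := by
    have hdouble : ∑ x : Fin (2 ^ (k + 1) - 1) → ZMod 2, hammingNorm (W.mulVec x) =
        ∑ i, (Finset.univ.filter fun x => W i ⬝ᵥ x ≠ 0).card := by
      simp only [hammingNorm, Finset.card_filter]
      exact Finset.sum_comm
    have hrow : ∀ i, W i ≠ 0 := fun i h => by
      have := hW i
      rw [h] at this
      exact zero_ne_one this
    rw [hdouble, Finset.mul_sum,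
      Finset.sum_congr rfl fun i _ => two_mul_card_dotProduct_ne_zero (hrow i)]
    simp
  have hle : ∑ x : Fin (2 ^ (k + 1) - 1) → ZMod 2, hammingNorm (W.mulVec x) ≤
      2 ^ (2 ^ (k + 1) - 1) * (2 ^ k - 1) := by
    have hx : ∀ x ∈ (Finset.univ : Finset (Fin (2 ^ (k + 1) - 1) → ZMod 2)),
        hammingNorm (W.mulVec x) ≤ 2 ^ k - 1 := fun x hx => by
      have : hammingNorm (W.mulVec x + 0) ≤ Mfun W 0 :=
        Finset.le_sup (f := fun x => hammingNorm (W.mulVec x + 0)) hx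
      rw [add_zero] at this
      omega
    simpa using Finset.sum_le_card_nsmul _ _ _ hx
  have hmul : 2 ^ (2 ^ (k + 1) - 1) * (2 ^ (k + 1) - 1) ≤
      2 ^ (2 ^ (k + 1) - 1) * (2 * (2 ^ k - 1)) := by linarith
  have := Nat.le_of_mul_le_mul_left hmul (by positivity)
  have hk : 0 < 2 ^ k := by positivity
  rw [pow_succ] at this
  omega

/-- The word `(⟨u, v⟩)_v` of the simplex code, with `v` running over the nonzero vectors through an
enumeration `e`, has weight `2 ^ k`. -/
theorem hammingNorm_simplex {k n : ℕ} (e : Fin n ≃ {v : Fin (k + 1) → ZMod 2 // v ≠ 0})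
    {u : Fin (k + 1) → ZMod 2} (hu : u ≠ 0) :
    hammingNorm (fun i => u ⬝ᵥ (e i).1) = 2 ^ k := by
  have hcard := two_mul_card_dotProduct_ne_zero hu
  have heq : hammingNorm (fun i => u ⬝ᵥ (e i).1) =
      (Finset.univ.filter fun v : Fin (k + 1) → ZMod 2 => u ⬝ᵥ v ≠ 0).card := by
    refine Finset.card_bij (fun i _ => (e i).1) ?_ ?_ ?_
    · intro i hi
      simpa using hi
    · intro i _ j _ h
      exact e.injective (Subtype.ext h)
    · intro v hv
      -- The zero vector, absent from the enumeration, lies in the kernel of every form.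
      have hv0 : v ≠ 0 := by
        rintro rfl
        simp at hv
      exact ⟨e.symm ⟨v, hv0⟩, by simpa using hv, by simp⟩
  rw [Fintype.card_fin, pow_succ] at hcard
  omega

theorem exists_matrix (k : ℕ) :
    ∃ W ∈ AstarSet (2 ^ (k + 1) - 1) (2 ^ k), Mfun W 0 ≤ 2 ^ k := by
  have hcard : Fintype.card {v : Fin (k + 1) → ZMod 2 // v ≠ 0} = 2 ^ (k + 1) - 1 := by
    rw [Fintype.card_subtype_compl, Fintype.card_subtype_eq]
    simp
  let e := (Fintype.equivFinOfCardEq hcard).symm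
  choose f hf using fun j => exists_dotProduct_eq_one (e j).2
  refine ⟨Matrix.of fun i j => f j ⬝ᵥ (e i).1, ⟨fun i => ?_, fun j => ?_⟩, ?_⟩
  · rw [Matrix.of_apply, dotProduct_comm]
    exact hf i
  · refine hammingNorm_simplex e fun h => ?_
    have := hf j
    rw [h, dotProduct_zero] at this
    exact zero_ne_one this
  · refine Finset.sup_le fun x _ => ?_
    -- By linearity `W x` is the codeword of `∑ j, x j • f j`.
    have hword : (Matrix.of fun i j => f j ⬝ᵥ (e i).1).mulVec x + 0 =
        fun i => (∑ j, x j • f j) ⬝ᵥ (e i).1 := by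
      funext i
      simp only [add_zero, Matrix.mulVec, sum_dotProduct, smul_dotProduct, smul_eq_mul]
      exact Finset.sum_congr rfl fun j _ => mul_comm _ _
    rw [hword]
    by_cases hu : ∑ j, x j • f j = 0
    · simp [hu, hammingNorm]
    · exact (hammingNorm_simplex e hu).le

/-- Theorem 3.4: for all `k ≥ 1` and `m ≥ 2^k`,
`μ(2^{k+1}−1, m) = μ*(2^{k+1}−1, 2^k) = 2^k`. -/
theorem mu_pow_two (k m : ℕ) (hk : 1 ≤ k) (hm : 2 ^ k ≤ m) :
    mu (2 ^ (k + 1) - 1) m = 2 ^ k ∧ muStar (2 ^ (k + 1) - 1) (2 ^ k) = 2 ^ k := by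
  obtain ⟨W, hW, hle⟩ := exists_matrix k
  have hWk : Mfun W 0 = 2 ^ k := le_antisymm hle (le_Mfun k W hW.1)
  constructor
  · refine IsLeast.csInf_eq ⟨⟨W, ⟨hW.1, fun j => (hW.2 j).le.trans hm⟩, hWk⟩, ?_⟩
    rintro _ ⟨V, hV, rfl⟩
    exact le_Mfun k V hV.1
  · refine IsLeast.csInf_eq ⟨⟨W, hW, hWk⟩, ?_⟩
    rintro _ ⟨V, hV, rfl⟩
    exact le_Mfun k V hV.1
end

section
/- For all positive integers n and m, μ(n,m) ≤ U(n,m). -/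
/-!
The bound is realised by a block-diagonal matrix whose blocks come from simplex codes.

For `k ≥ 0` let the rows be indexed by the nonzero vectors `v` of `𝔽₂^(k+1)`, and let column `j` be
the word `v ↦ v (c j)`, where `c j` is a coordinate in which `j` is nonzero. The diagonal entries
are then 1, and every combination of columns is a linear functional evaluated at all nonzero
vectors, so it has weight at most `2^k` (`card_functional_le`). This gives a block of size
`2^(k+1) - 1` with column weights and maximum weight at most `2^k` (`realizable_simplex`).

Sizes and maximum weights add up along block-diagonal sums (`Realizable.add`). The recursion for `a`
describes precisely a decomposition of `r` into simplex sizes whose columns have weight at most `r`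
(`realizable_aseq`), and `U(n,m)` is the total for `q` full blocks with `2^k ≤ m < 2^(k+1)` followed
by such a decomposition of `r`.
-/


open Matrix

/-- Some square matrix over `𝔽₂` indexed by `ι` has unit diagonal, columns of weight at most `m`,
and a column space whose vectors all have weight at most `t`. An arbitrary index type is allowed so
that blocks can be indexed by vectors and by disjoint sums. -/
def Realizable (ι : Type) [Fintype ι] (m t : ℕ) : Prop :=
  ∃ W : Matrix ι ι (ZMod 2), (∀ i, W i i = 1) ∧ (∀ j, hammingNorm (fun i => W i j) ≤ m) ∧
    ∀ x : ι → ZMod 2, hammingNorm (W.mulVec x) ≤ t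

lemma hammingNorm_comp_equiv {ι κ : Type} [Fintype ι] [Fintype κ] (e : κ ≃ ι)
    (f : ι → ZMod 2) : hammingNorm (fun i => f (e i)) = hammingNorm f := by
  unfold hammingNorm
  refine Finset.card_bij (fun i _ => e i) ?_ ?_ ?_
  · intro i hi; simpa using hi
  · intro i _ j _ h; exact e.injective h
  · intro b hb; exact ⟨e.symm b, by simpa using hb, by simp⟩

lemma hammingNorm_sum {ι κ : Type} [Fintype ι] [Fintype κ] (f : ι ⊕ κ → ZMod 2) :
    hammingNorm f = hammingNorm (fun i => f (Sum.inl i)) + hammingNorm (fun i => f (Sum.inr i)) := by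
  unfold hammingNorm
  simp only [Finset.card_filter, Fintype.sum_sum_type]

lemma Realizable.congr {ι κ : Type} [Fintype ι] [Fintype κ] (e : κ ≃ ι) {m t : ℕ}
    (h : Realizable ι m t) : Realizable κ m t := by
  obtain ⟨W, h1, h2, h3⟩ := h
  refine ⟨W.submatrix e e, fun i => h1 _, fun j => ?_, fun x => ?_⟩
  · exact (hammingNorm_comp_equiv e (fun i => W i (e j))).trans_le (h2 _)
  · rw [Matrix.submatrix_mulVec_equiv]
    exact (hammingNorm_comp_equiv e _).trans_le (h3 _)

lemma Realizable.sum {ι κ : Type} [Fintype ι] [Fintype κ] {m s t : ℕ}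
    (h : Realizable ι m s) (h' : Realizable κ m t) : Realizable (ι ⊕ κ) m (s + t) := by
  obtain ⟨W, h1, h2, h3⟩ := h
  obtain ⟨V, g1, g2, g3⟩ := h'
  refine ⟨Matrix.fromBlocks W 0 0 V, ?_, ?_, fun x => ?_⟩
  · rintro (i | i)
    · exact h1 i
    · exact g1 i
  · rintro (j | j)
    · rw [hammingNorm_sum]
      exact Nat.add_le_add (h2 j) (hammingNorm_zero (β := fun _ : κ => ZMod 2)).le
    · rw [hammingNorm_sum]
      exact (Nat.add_le_add (hammingNorm_zero (β := fun _ : ι => ZMod 2)).le (g2 j)).trans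
        (Nat.zero_add m).le
  · rw [hammingNorm_sum, Matrix.fromBlocks_mulVec]
    refine Nat.add_le_add ?_ ?_
    · simpa using h3 (x ∘ Sum.inl)
    · simpa using g3 (x ∘ Sum.inr)

lemma Realizable.add {a b m s t : ℕ} (h : Realizable (Fin a) m s)
    (h' : Realizable (Fin b) m t) : Realizable (Fin (a + b)) m (s + t) :=
  (h.sum h').congr finSumFinEquiv.symm

lemma realizable_zero (m : ℕ) : Realizable (Fin 0) m 0 :=
  ⟨0, fun i => i.elim0, fun j => j.elim0, fun x => by simp [hammingNorm]⟩

/-- An additive functional on `𝔽₂^(k+1)` is nonzero on at most half of the vectors: translation by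
a vector outside its kernel maps the complement of the kernel into the kernel. -/
lemma card_functional_le (k : ℕ) (f : (Fin (k + 1) → ZMod 2) →+ ZMod 2) :
    (Finset.univ.filter fun v => f v ≠ 0).card ≤ 2 ^ k := by
  by_cases hf : ∃ w, f w ≠ 0
  · obtain ⟨w, hw⟩ := hf
    have h1 : (Finset.univ.filter fun v => f v ≠ 0).card
        ≤ (Finset.univ.filter fun v => ¬ f v ≠ 0).card := by
      refine Finset.card_le_card_of_injOn (fun v => v + w) ?_ ?_
      · intro v hv
        have hv' : f v ≠ 0 := by simpa using hv
        have key : ∀ a b : ZMod 2, a ≠ 0 → b ≠ 0 → a + b = 0 := by decide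
        simpa using key _ _ hv' hw
      · intro v _ v' _ h
        exact add_right_cancel h
    have h2 := Finset.card_filter_add_card_filter_not
      (s := (Finset.univ : Finset (Fin (k + 1) → ZMod 2))) (fun v => f v ≠ 0)
    have h3 : (Finset.univ : Finset (Fin (k + 1) → ZMod 2)).card = 2 ^ (k + 1) := by
      simp [ZMod.card]
    rw [h3, pow_succ] at h2
    omega
  · push Not at hf
    simp [hf]

/-- The simplex code of length `2^(k+1) - 1`, arranged as a square matrix with unit diagonal. -/
lemma realizable_simplex (k m : ℕ) (hm : 2 ^ k ≤ m) :
    Realizable (Fin (2 ^ (k + 1) - 1)) m (2 ^ k) := by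
  have hcard : Fintype.card {v : Fin (k + 1) → ZMod 2 // v ≠ 0} = 2 ^ (k + 1) - 1 := by
    rw [Fintype.card_subtype_compl]
    simp [ZMod.card]
  refine Realizable.congr (Fintype.equivFinOfCardEq hcard).symm ?_
  have hc : ∀ j : {v : Fin (k + 1) → ZMod 2 // v ≠ 0}, ∃ c, j.1 c = 1 := by
    intro j
    obtain ⟨c, h⟩ := Function.ne_iff.mp j.2
    have key : ∀ a : ZMod 2, a ≠ 0 → a = 1 := by decide
    exact ⟨c, key _ h⟩
  choose c hc using hc
  have hfun : ∀ f : (Fin (k + 1) → ZMod 2) →+ ZMod 2,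
      hammingNorm (fun i : {v : Fin (k + 1) → ZMod 2 // v ≠ 0} => f i.1) ≤ 2 ^ k := by
    intro f
    refine le_trans ?_ (card_functional_le k f)
    unfold hammingNorm
    refine Finset.card_le_card_of_injOn Subtype.val ?_ Subtype.val_injective.injOn
    intro i hi
    simpa using hi
  refine ⟨fun i j => i.1 (c j), hc, fun j => ?_, fun x => ?_⟩
  · exact (hfun (Pi.evalAddMonoidHom (fun _ => ZMod 2) (c j))).trans hm
  · exact hfun
      { toFun := fun v => ∑ j, v (c j) * x j
        map_zero' := by simp
        map_add' := fun u v => by simp [add_mul, Finset.sum_add_distrib] }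

/-- The recursion for `a` splits off simplex blocks; the largest one used for `r` has columns of
weight a power of two not exceeding `r`. -/
lemma realizable_aseq (m r : ℕ) (h : ∀ j, 2 ^ j ≤ r → 2 ^ j ≤ m) :
    Realizable (Fin r) m (aseq r) := by
  induction r using Nat.strong_induction_on with
  | _ r ih =>
    match r, h, ih with
    | 0, _, _ => rw [aseq]; exact realizable_zero m
    | 1, h, _ => rw [aseq]; simpa using realizable_simplex 0 m (h 0 (by simp))
    | n + 2, h, ih =>
      rw [aseq]
      have hk : 1 ≤ Nat.log2 (n + 2) := (Nat.le_log2 (by omega)).2 (by omega)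
      have hle : 2 ^ Nat.log2 (n + 2) ≤ n + 2 := Nat.log2_self_le (by omega)
      generalize Nat.log2 (n + 2) = k at hk hle
      split_ifs with heq
      · rw [heq]
        exact realizable_simplex k m (h k hle)
      · obtain ⟨l, rfl⟩ := Nat.exists_eq_add_of_le' hk
        have hpow : 2 ^ (l + 1) = 2 * 2 ^ l := by ring
        have hpos : 1 ≤ 2 ^ l := Nat.one_le_two_pow
        have h1 := realizable_simplex l m (h l (by omega))
        have h2 := ih (n + 2 - (2 ^ (l + 1) - 1)) (by omega)
          (fun j hj => h j (hj.trans (Nat.sub_le _ _)))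
        have h3 := h1.add h2
        have hsize : 2 ^ (l + 1) - 1 + (n + 2 - (2 ^ (l + 1) - 1)) = n + 2 := by omega
        rw [hsize] at h3
        simpa using h3

lemma Realizable.mul {p m s : ℕ} (h : Realizable (Fin p) m s) (q : ℕ) :
    Realizable (Fin (q * p)) m (q * s) := by
  induction q with
  | zero => rw [Nat.zero_mul, Nat.zero_mul]; exact realizable_zero m
  | succ q ih => rw [Nat.succ_mul, Nat.succ_mul]; exact ih.add h

lemma mu_le_of_realizable {n m t : ℕ} (h : Realizable (Fin n) m t) : mu n m ≤ t := by
  obtain ⟨W, h1, h2, h3⟩ := h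
  have hW : mu n m ≤ Mfun W 0 := Nat.sInf_le ⟨W, ⟨h1, h2⟩, rfl⟩
  refine hW.trans ?_
  exact Finset.sup_le fun x _ => by simpa using h3 x

/-- Proposition 4.1: `μ(n,m) ≤ U(n,m)` for all positive integers `n, m`. -/
theorem mu_le_U (n m : ℕ) (hn : 1 ≤ n) (hm : 1 ≤ m) : mu n m ≤ Ufun n m := by
  apply mu_le_of_realizable
  unfold Ufun
  dsimp only
  have hkm : 2 ^ Nat.log2 m ≤ m := Nat.log2_self_le (by omega)
  generalize Nat.log2 m = k at hkm
  have hpos : 1 < 2 ^ (k + 1) := Nat.one_lt_two_pow (by omega)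
  have hblocks := (realizable_simplex k m hkm).mul ((n - 1) / (2 ^ (k + 1) - 1))
  have hmod := Nat.mod_lt (n - 1) (y := 2 ^ (k + 1) - 1) (by omega)
  have hrest := realizable_aseq m ((n - 1) % (2 ^ (k + 1) - 1) + 1) (by
    intro j hj
    have hjk : j < k + 1 := (Nat.pow_lt_pow_iff_right (by norm_num : 1 < 2)).1
      (show 2 ^ j < 2 ^ (k + 1) by omega)
    exact (Nat.pow_le_pow_right (by norm_num) (by omega)).trans hkm)
  have hsum := hblocks.add hrest
  have hsize : (n - 1) / (2 ^ (k + 1) - 1) * (2 ^ (k + 1) - 1)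
      + ((n - 1) % (2 ^ (k + 1) - 1) + 1) = n := by
    have := Nat.div_add_mod' (n - 1) (2 ^ (k + 1) - 1)
    omega
  rwa [hsize] at hsum
end
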